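/- Let m be a nonempty finite word over the four unit directions of ℤ² such that the walk in ℤ² starting at the origin and following the letters of the word m·m (the concatenation of m with itself) visits no lattice point twice (i.e., m² is a self-avoiding path). Then for every integer k ≥ 1, the walk following m^k (k consecutive copies of m) starting at the origin is also self-avoiding. -/

import Mathlib

/-!
Let `v` be the displacement of `m`, and call the difference of two points of a walk a chord. Since
the walk of `m ^ k` consists of translates of the walk of `m` by multiples of `v`, it intersects
itself only if some `k • v` with `k > 0` is a chord of the walk of `m`. That `m ^ 2` is
self-avoiding excludes `k = 1`, and the other `k` follow by induction from the lattice version of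
Hopf's chord theorem: if `(i + j) • v` is a chord of a walk, then so is `i • v` or `j • v`.

To prove the latter, close the walk up periodically with period `(i + j) • v`, start it at a point
farthest to the left of `v`, and suppose that `W a - W b - i • v` never vanishes on the triangle
`b ≤ a ≤ N`. Then its winding number along the boundary of the triangle is zero. However, it is
constantly `-i • v` on the diagonal, while the two legs lead from `-i • v` to `j • v` on the right
of `v` and back on the left, so that the winding number is one.
-/

/-- The four unit directions of ℤ². -/
def Dir : Set (ℤ × ℤ) := {(1,0), (0,1), (0,-1), (-1,0)}

/-- Partial sum of the first `n` letters of a word: the `n`-th point of the walk from 0. -/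
def psum (m : List (ℤ × ℤ)) (n : ℕ) : ℤ × ℤ := (m.take n).sum

/-- A word is self-avoiding (a free path) if the walk from the origin visits no point twice. -/
def SelfAvoiding (m : List (ℤ × ℤ)) : Prop :=
  Function.Injective fun n : Fin (m.length + 1) => psum m n

section Periodize

variable {G : Type*} [AddCommMonoid G] {w : ℕ → G} {N : ℕ} {T : G}

/-- The sequence that repeats `w 0, …, w (N - 1)` forever, translated by `T` after each period.
For `N = 0`, where `c / 0 = 0` and `c % 0 = c`, it is `w` itself. -/
def periodize (w : ℕ → G) (N : ℕ) (T : G) (c : ℕ) : G := w (c % N) + (c / N) • T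

theorem periodize_of_lt {c : ℕ} (hc : c < N) : periodize w N T c = w c := by
  simp [periodize, Nat.mod_eq_of_lt hc, Nat.div_eq_of_lt hc]

theorem periodize_add_mul (hN : 0 < N) (c q : ℕ) :
    periodize w N T (c + N * q) = periodize w N T c + q • T := by
  simp [periodize, Nat.add_mul_div_left _ _ hN, add_smul, add_assoc]

theorem periodize_add_period (hN : 0 < N) (c : ℕ) :
    periodize w N T (c + N) = periodize w N T c + T := by
  simpa using periodize_add_mul (w := w) (T := T) hN c 1

theorem periodize_of_le (hN : 0 < N) (hT : w N = w 0 + T) {c : ℕ} (hc : c ≤ N) :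
    periodize w N T c = w c := by
  rcases hc.lt_or_eq with hlt | rfl
  · exact periodize_of_lt hlt
  · simp [periodize, Nat.div_self hN, hT]

end Periodize

section Chords

variable {G : Type*} [AddCommGroup G] {w : ℕ → G} {N : ℕ}

/-- The chords of the finite sequence `w 0, …, w N`: the differences of any two of its terms, in
either order. -/
def chords (w : ℕ → G) (N : ℕ) : Set G := {p | ∃ a ≤ N, ∃ b ≤ N, w a - w b = p}

theorem zero_mem_chords : 0 ∈ chords w N :=
  ⟨0, N.zero_le, 0, N.zero_le, sub_self _⟩

theorem neg_mem_chords {p : G} : -p ∈ chords w N ↔ p ∈ chords w N := by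
  suffices ∀ q ∈ chords w N, -q ∈ chords w N from
    ⟨fun hp => neg_neg p ▸ this _ hp, this p⟩
  rintro _ ⟨a, ha, b, hb, rfl⟩
  exact ⟨b, hb, a, ha, (neg_sub _ _).symm⟩

theorem chords_shift_subset (w : ℕ → G) {s t : ℕ} (hst : s ≤ t) (htN : t ≤ N) :
    chords (fun c => w (s + c)) (t - s) ⊆ chords w N := by
  rintro _ ⟨a, ha, b, hb, rfl⟩
  exact ⟨s + a, by lia, s + b, by lia, rfl⟩

theorem map_mem_chords_comp_iff {H : Type*} [AddCommGroup H] (φ : G ≃+ H) {p : G} :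
    φ p ∈ chords (φ ∘ w) N ↔ p ∈ chords w N := by
  simp only [chords, Function.comp_apply, Set.mem_ofPred_eq, ← map_sub, φ.injective.eq_iff]

theorem periodize_injective {T : G} (hw : Set.InjOn w (Set.Iic N))
    (hT : ∀ k, 0 < k → k • T ∉ chords w N) : Function.Injective (periodize w (N + 1) T) := by
  intro a b hab
  wlog hle : a / (N + 1) ≤ b / (N + 1) generalizing a b
  · exact (this hab.symm (le_of_not_ge hle)).symm
  have ha : a % (N + 1) ≤ N := Nat.lt_succ_iff.1 (Nat.mod_lt _ N.succ_pos)
  have hb : b % (N + 1) ≤ N := Nat.lt_succ_iff.1 (Nat.mod_lt _ N.succ_pos)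
  obtain ⟨k, hk⟩ := Nat.exists_eq_add_of_le hle
  have hchord : w (a % (N + 1)) - w (b % (N + 1)) = k • T := by
    simp only [periodize, hk, add_smul] at hab
    rw [eq_sub_of_add_eq hab]
    abel
  obtain rfl | hkpos := k.eq_zero_or_pos
  · have hmod := hw ha hb (by simpa [sub_eq_zero] using hchord)
    rw [← Nat.div_add_mod a (N + 1), ← Nat.div_add_mod b (N + 1), hmod, hk, add_zero]
  · exact absurd ⟨_, ha, _, hb, hchord⟩ (hT k hkpos)

theorem nsmul_mem_chords_or_of_periodize_sub_eq {v : G} {i j a b : ℕ} (hN : 0 < N) (hba : b ≤ a)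
    (hab : a ≤ b + N)
    (h : periodize w N ((i + j) • v) a - periodize w N ((i + j) • v) b = i • v) :
    i • v ∈ chords w N ∨ j • v ∈ chords w N := by
  have ha : a % N ≤ N := (Nat.mod_lt a hN).le
  have hb : b % N ≤ N := (Nat.mod_lt b hN).le
  have hdiv : a / N = b / N ∨ a / N = b / N + 1 := by
    have hle : b / N ≤ a / N := Nat.div_le_div_right hba
    have hge : a / N ≤ (b + N) / N := Nat.div_le_div_right hab
    rw [Nat.add_div_right _ hN] at hge
    lia
  simp only [periodize] at h
  rcases hdiv with hsame | hnext
  · rw [hsame, add_sub_add_right_eq_sub] at h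
    exact .inl ⟨_, ha, _, hb, h⟩
  · refine .inr ⟨_, hb, _, ha, ?_⟩
    rw [hnext, succ_nsmul] at h
    calc w (b % N) - w (a % N) = (i + j) • v - i • v := by rw [← h]; abel
      _ = j • v := by rw [add_smul, add_sub_cancel_left]

end Chords

section LatticeWalks

variable {p v : ℤ × ℤ} {w : ℕ → ℤ × ℤ} {N : ℕ}

theorem mem_Dir : p ∈ Dir ↔
    (p.1 = 1 ∧ p.2 = 0) ∨ (p.1 = 0 ∧ p.2 = 1) ∨ (p.1 = 0 ∧ p.2 = -1) ∨ (p.1 = -1 ∧ p.2 = 0) := by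
  simp only [Dir, Set.mem_insert_iff, Set.mem_singleton_iff, Prod.ext_iff]

theorem neg_mem_Dir (hp : p ∈ Dir) : -p ∈ Dir := by
  simp only [mem_Dir, Prod.fst_neg, Prod.snd_neg] at hp ⊢
  lia

/-- The points `w 0, …, w N` form a lattice walk: consecutive ones differ by a unit direction. -/
def UnitSteps (w : ℕ → ℤ × ℤ) (N : ℕ) : Prop := ∀ c < N, w (c + 1) - w c ∈ Dir

theorem UnitSteps.shift (hw : UnitSteps w N) {s t : ℕ} (htN : t ≤ N) :
    UnitSteps (fun c => w (s + c)) (t - s) :=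
  fun c hc => hw (s + c) (by lia)

theorem UnitSteps.sub_const (hw : UnitSteps w N) (p : ℤ × ℤ) : UnitSteps (fun c => w c - p) N := by
  simpa only [UnitSteps, sub_sub_sub_cancel_right] using hw

theorem UnitSteps.const_sub (hw : UnitSteps w N) (p : ℤ × ℤ) : UnitSteps (fun c => p - w c) N := by
  intro c hc
  simpa only [neg_sub, sub_sub_sub_cancel_left] using neg_mem_Dir (hw c hc)

theorem UnitSteps.map (hw : UnitSteps w N) {φ : ℤ × ℤ ≃+ ℤ × ℤ} (hφ : ∀ d ∈ Dir, φ d ∈ Dir) :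
    UnitSteps (φ ∘ w) N := by
  intro c hc
  simpa only [Function.comp_apply, map_sub] using hφ _ (hw c hc)

theorem UnitSteps.periodize_succ_sub_mem_Dir (hw : UnitSteps w N) (hN : 0 < N) (hv : w N = w 0 + v)
    (c : ℕ) : periodize w N v (c + 1) - periodize w N v c ∈ Dir := by
  have hmod : c % N + 1 ≤ N := Nat.mod_lt c hN
  have hstep := hw _ hmod
  rwa [← periodize_of_le hN hv hmod, ← periodize_of_le hN hv (Nat.le_of_succ_le hmod),
    ← add_sub_add_right_eq_sub _ _ ((c / N) • v), ← periodize_add_mul hN, ← periodize_add_mul hN,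
    Nat.add_right_comm, Nat.mod_add_div] at hstep

theorem exists_addEquiv_fst_pos (hv : v ≠ 0) :
    ∃ φ : ℤ × ℤ ≃+ ℤ × ℤ, (∀ d ∈ Dir, φ d ∈ Dir) ∧ 0 < (φ v).1 := by
  have hswap : ∀ d ∈ Dir, d.swap ∈ Dir := by
    intro d hd
    simp only [mem_Dir, Prod.fst_swap, Prod.snd_swap] at hd ⊢
    lia
  rcases lt_trichotomy v.1 0 with hneg | hzero | hpos
  · exact ⟨AddEquiv.neg _, fun _ => neg_mem_Dir, neg_pos.2 hneg⟩
  · rcases lt_or_gt_of_ne (fun h => hv (Prod.ext hzero h) : v.2 ≠ 0) with hneg | hpos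
    · exact ⟨AddEquiv.prodComm.trans (AddEquiv.neg _), fun d hd => neg_mem_Dir (hswap d hd),
        neg_pos.2 hneg⟩
    · exact ⟨AddEquiv.prodComm, hswap, hpos⟩
  · exact ⟨AddEquiv.refl _, fun _ => id, hpos⟩

end LatticeWalks

section Crossing

variable {p q r s v : ℤ × ℤ}

/-- The indicator function of the closed right half-plane. -/
def rightSide (p : ℤ × ℤ) : ℤ := if 0 ≤ p.1 then 1 else 0

/-- The signed number of times the unit step from `p` to `q` crosses the open upper half of the
vertical axis, counted positively from left to right. The axis itself belongs to the right side.
Summed along a closed lattice walk avoiding the origin, it gives the clockwise winding number. -/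
def crossing (p q : ℤ × ℤ) : ℤ := if 0 < p.2 then rightSide q - rightSide p else 0

theorem crossing_add_crossing_swap (hpq : q - p ∈ Dir) : crossing p q + crossing q p = 0 := by
  simp only [mem_Dir, Prod.fst_sub, Prod.snd_sub] at hpq
  simp only [crossing, rightSide]
  split_ifs <;> lia

theorem ne_zero_iff_fst_or_snd : p ≠ 0 ↔ p.1 ≠ 0 ∨ p.2 ≠ 0 := by
  rw [Ne, Prod.ext_iff, not_and_or]; rfl

theorem crossing_parallelogram (hpq : q - p ∈ Dir) (hpr : r - p ∈ Dir) (hs : p + s = q + r)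
    (hp : p ≠ 0) (hq : q ≠ 0) (hr : r ≠ 0) (hs₀ : s ≠ 0) :
    crossing p q + crossing q s = crossing p r + crossing r s := by
  simp only [ne_zero_iff_fst_or_snd] at hp hq hr hs₀
  simp only [mem_Dir, Prod.fst_sub, Prod.snd_sub] at hpq hpr
  simp only [Prod.ext_iff, Prod.fst_add, Prod.snd_add] at hs
  simp only [crossing, rightSide]
  split_ifs <;> lia

/-- The cross product with `v`. It is positive on the open half-plane to the left of `v`. -/
def wedge (v : ℤ × ℤ) : ℤ × ℤ →+ ℤ := v.1 • AddMonoidHom.snd ℤ ℤ - v.2 • AddMonoidHom.fst ℤ ℤ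

theorem wedge_apply (v p : ℤ × ℤ) : wedge v p = v.1 * p.2 - v.2 * p.1 := rfl

theorem wedge_self (v : ℤ × ℤ) : wedge v v = 0 := by
  rw [wedge_apply, mul_comm, sub_self]

theorem wedge_nsmul_self (v : ℤ × ℤ) (k : ℕ) : wedge v (k • v) = 0 := by
  rw [map_nsmul, wedge_self, smul_zero]

theorem snd_nonpos_of_wedge_nonpos (hv : 0 < v.1) (hp : wedge v p ≤ 0) (hp₁ : p.1 = 0) :
    p.2 ≤ 0 := by
  rw [wedge_apply, hp₁, mul_zero, sub_zero] at hp
  exact nonpos_of_mul_nonpos_right hp hv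

theorem snd_nonneg_of_wedge_nonneg (hv : 0 < v.1) (hp : 0 ≤ wedge v p) (hp₁ : p.1 = 0) :
    0 ≤ p.2 := by
  rw [wedge_apply, hp₁, mul_zero, sub_zero] at hp
  exact nonneg_of_mul_nonneg_right hp hv

theorem crossing_eq_zero_of_wedge_nonpos (hv : 0 < v.1) (hp : wedge v p ≤ 0) (hq : wedge v q ≤ 0)
    (hpq : q - p ∈ Dir) : crossing p q = 0 := by
  have hp' := snd_nonpos_of_wedge_nonpos hv hp
  have hq' := snd_nonpos_of_wedge_nonpos hv hq
  simp only [mem_Dir, Prod.fst_sub, Prod.snd_sub] at hpq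
  simp only [crossing, rightSide]
  split_ifs <;> lia

theorem crossing_eq_sub_of_wedge_nonneg (hv : 0 < v.1) (hp : 0 ≤ wedge v p) (hq : 0 ≤ wedge v q)
    (hp₀ : p ≠ 0) (hq₀ : q ≠ 0) (hpq : q - p ∈ Dir) :
    crossing p q = rightSide q - rightSide p := by
  have hp' := snd_nonneg_of_wedge_nonneg hv hp
  have hq' := snd_nonneg_of_wedge_nonneg hv hq
  rw [ne_zero_iff_fst_or_snd] at hp₀ hq₀
  simp only [mem_Dir, Prod.fst_sub, Prod.snd_sub] at hpq
  simp only [crossing, rightSide]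
  split_ifs <;> lia

end Crossing

section ChordTheorem

variable {p v : ℤ × ℤ} {w : ℕ → ℤ × ℤ} {N i j : ℕ}

-- Discrete Stokes on the triangle `b ≤ a ≤ N`: the squares off the diagonal are closed, and the
-- diagonal is followed by the staircase through the points `(a + 1, a)`.
theorem sum_triangle_boundary {G : Type*} [AddCommGroup G] (x y : ℕ → ℕ → G) (N : ℕ)
    (hxy : ∀ a < N, ∀ b < a, x a b + y (a + 1) b = y a b + x a (b + 1)) :
    ∑ a ∈ Finset.range N, x a 0 + ∑ b ∈ Finset.range N, y N b =
      ∑ a ∈ Finset.range N, (x a a + y (a + 1) a) := by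
  induction N with
  | zero => simp
  | succ N ih =>
    have hrow : ∑ b ∈ Finset.range N, y (N + 1) b =
        ∑ b ∈ Finset.range N, y N b + (x N N - x N 0) := by
      rw [← Finset.sum_range_sub (x N), ← Finset.sum_add_distrib]
      refine Finset.sum_congr rfl fun b hb => ?_
      have := hxy N N.lt_succ_self b (Finset.mem_range.1 hb)
      rw [eq_sub_of_add_eq' this]
      abel
    have ih := ih fun a ha => hxy a (ha.trans N.lt_succ_self)
    rw [Finset.sum_range_succ, Finset.sum_range_succ, Finset.sum_range_succ, ← ih, hrow]
    abel

-- The closed walk runs along the two legs of the triangle `b ≤ a ≤ N`. It is contracted through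
-- the triangle to the hypotenuse `a = b`, where the difference is constantly `-p`.
theorem sum_crossing_legs_eq_zero (hw : UnitSteps w N)
    (hp : ∀ a ≤ N, ∀ b ≤ a, w a - w b ≠ p) :
    ∑ a ∈ Finset.range N, crossing (w a - w 0 - p) (w (a + 1) - w 0 - p) +
      ∑ b ∈ Finset.range N, crossing (w N - w b - p) (w N - w (b + 1) - p) = 0 := by
  have hne : ∀ a ≤ N, ∀ b ≤ a, w a - w b - p ≠ 0 := fun a ha b hb => sub_ne_zero.2 (hp a ha b hb)
  have hright : ∀ b, UnitSteps (fun a => w a - w b - p) N :=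
    fun b => (hw.sub_const (w b)).sub_const p
  have hup : ∀ a, UnitSteps (fun b => w a - w b - p) N :=
    fun a => (hw.const_sub (w a)).sub_const p
  rw [sum_triangle_boundary (fun a b => crossing (w a - w b - p) (w (a + 1) - w b - p))
    (fun a b => crossing (w a - w b - p) (w a - w (b + 1) - p))]
  · refine Finset.sum_eq_zero fun a ha => ?_
    have hback := crossing_add_crossing_swap (hright a a (Finset.mem_range.1 ha))
    simpa only [sub_self] using hback
  · intro a ha b hb
    exact crossing_parallelogram (hright b a ha) (hup a b (by lia)) (by abel)
      (hne a ha.le b hb.le) (hne (a + 1) ha b (by lia)) (hne a ha.le (b + 1) hb)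
      (hne (a + 1) ha (b + 1) (by lia))

theorem sum_crossing_eq_zero_of_wedge_nonpos (hw : UnitSteps w N) (hv : 0 < v.1)
    (hle : ∀ c ≤ N, wedge v (w c) ≤ 0) :
    ∑ c ∈ Finset.range N, crossing (w c) (w (c + 1)) = 0 := by
  refine Finset.sum_eq_zero fun c hc => ?_
  rw [Finset.mem_range] at hc
  exact crossing_eq_zero_of_wedge_nonpos hv (hle c hc.le) (hle (c + 1) hc) (hw c hc)

theorem sum_crossing_eq_sub_of_wedge_nonneg (hw : UnitSteps w N) (hv : 0 < v.1)
    (hge : ∀ c ≤ N, 0 ≤ wedge v (w c)) (hne : ∀ c ≤ N, w c ≠ 0) :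
    ∑ c ∈ Finset.range N, crossing (w c) (w (c + 1)) = rightSide (w N) - rightSide (w 0) := by
  rw [← Finset.sum_range_sub fun c => rightSide (w c)]
  refine Finset.sum_congr rfl fun c hc => ?_
  rw [Finset.mem_range] at hc
  exact crossing_eq_sub_of_wedge_nonneg hv (hge c hc.le) (hge (c + 1) hc) (hne c hc.le)
    (hne (c + 1) hc) (hw c hc)

-- If `i • v` is missed, the first leg of the closed walk stays weakly right of the line `ℝ v` and
-- makes no crossing, while the second goes from `j • v` to `-(i • v)` weakly left of it and makes
-- a net crossing.
theorem exists_sub_eq_nsmul_of_wedge_le (hw : UnitSteps w N) (hv : 0 < v.1) (hi : 0 < i)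
    (hN : w N = w 0 + (i + j) • v) (hmax : ∀ c ≤ N, wedge v (w c) ≤ wedge v (w 0)) :
    ∃ a ≤ N, ∃ b ≤ a, w a - w b = i • v := by
  by_contra! hmiss
  have hle : ∀ a ≤ N, wedge v (w a - w 0 - i • v) ≤ 0 := by
    intro a ha
    simpa only [map_sub, wedge_nsmul_self, sub_zero, sub_nonpos] using hmax a ha
  have hge : ∀ b ≤ N, 0 ≤ wedge v (w N - w b - i • v) := by
    intro b hb
    simpa only [hN, map_sub, map_add, wedge_nsmul_self, sub_zero, add_zero, sub_nonneg]
      using hmax b hb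
  have hfirst := sum_crossing_eq_zero_of_wedge_nonpos
    ((hw.sub_const (w 0)).sub_const (i • v)) hv hle
  have hsecond := sum_crossing_eq_sub_of_wedge_nonneg
    ((hw.const_sub (w N)).sub_const (i • v)) hv hge
    fun b hb => sub_ne_zero.2 (hmiss N le_rfl b hb)
  have hstart : rightSide (w N - w 0 - i • v) = 1 := by
    rw [hN, add_sub_cancel_left, add_smul, add_sub_cancel_left, rightSide, if_pos]
    exact nsmul_nonneg hv.le j
  have hend : rightSide (w N - w N - i • v) = 0 := by
    rw [sub_self, zero_sub, rightSide, if_neg]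
    exact not_le.2 (neg_neg_of_pos (nsmul_pos hv hi.ne'))
  have htotal := sum_crossing_legs_eq_zero hw hmiss
  rw [hfirst, hsecond, hstart, hend] at htotal
  lia

-- Continued periodically and restarted at a point that is highest over the line `ℝ v`, the walk
-- satisfies the extremality condition of `exists_sub_eq_nsmul_of_wedge_le`.
theorem nsmul_mem_chords_or_of_fst_pos (hw : UnitSteps w N) (hv : 0 < v.1) (hi : 0 < i)
    (hN : w N = w 0 + (i + j) • v) : i • v ∈ chords w N ∨ j • v ∈ chords w N := by
  have hNpos : 0 < N := by
    refine Nat.pos_of_ne_zero fun h => ?_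
    subst h
    have hfst : 0 < ((i + j) • v).1 := nsmul_pos hv (by lia)
    rw [left_eq_add.1 hN] at hfst
    exact hfst.false
  set W := periodize w N ((i + j) • v) with hW
  have hwedge : ∀ c, wedge v (W c) = wedge v (w (c % N)) := by
    intro c
    rw [hW, periodize, map_add, map_nsmul, wedge_nsmul_self, smul_zero, add_zero]
  obtain ⟨t, ht, hmax⟩ := Finset.exists_max_image (Finset.range N) (fun c => wedge v (w c))
    ⟨0, Finset.mem_range.2 hNpos⟩
  have htop : ∀ c, wedge v (W c) ≤ wedge v (W t) := by
    intro c
    rw [hwedge, hwedge, Nat.mod_eq_of_lt (Finset.mem_range.1 ht)]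
    exact hmax _ (Finset.mem_range.2 (Nat.mod_lt c hNpos))
  obtain ⟨a, ha, b, hb, hab⟩ := exists_sub_eq_nsmul_of_wedge_le (w := fun c => W (t + c)) (N := N)
    (fun c _ => hw.periodize_succ_sub_mem_Dir hNpos hN (t + c)) hv hi (periodize_add_period hNpos t)
    (fun c _ => htop (t + c))
  exact nsmul_mem_chords_or_of_periodize_sub_eq hNpos (by lia) (by lia) hab

theorem nsmul_mem_chords_or_of_eq_add_nsmul (hw : UnitSteps w N) (hN : w N = w 0 + (i + j) • v) :
    i • v ∈ chords w N ∨ j • v ∈ chords w N := by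
  by_cases hiv : i • v = 0
  · exact .inl (hiv ▸ zero_mem_chords)
  have hi : 0 < i := Nat.pos_of_ne_zero fun h => hiv (by rw [h, zero_smul])
  have hv : v ≠ 0 := fun h => hiv (by rw [h, smul_zero])
  obtain ⟨φ, hφ, hpos⟩ := exists_addEquiv_fst_pos hv
  have hφN : (φ ∘ w) N = (φ ∘ w) 0 + (i + j) • φ v := by
    simp only [Function.comp_apply, hN, map_add, map_nsmul]
  simpa only [← map_nsmul, map_mem_chords_comp_iff] using
    nsmul_mem_chords_or_of_fst_pos (hw.map hφ) hpos hi hφN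

-- The planar lattice version of Hopf's theorem that the complement of the chord set is additive.
theorem nsmul_mem_chords_or_of_add_nsmul_mem (hw : UnitSteps w N)
    (h : (i + j) • v ∈ chords w N) : i • v ∈ chords w N ∨ j • v ∈ chords w N := by
  obtain ⟨t, ht, s, hs, hts⟩ := h
  wlog hst : s ≤ t generalizing s t v
  · have := this (v := -v) s hs t ht (by rw [smul_neg, ← hts, neg_sub]) (le_of_not_ge hst)
    simpa only [smul_neg, neg_mem_chords] using this
  refine (nsmul_mem_chords_or_of_eq_add_nsmul (hw.shift (s := s) ht) ?_).imp
    (chords_shift_subset w hst ht ·) (chords_shift_subset w hst ht ·)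
  rw [add_zero, Nat.add_sub_of_le hst, ← hts, add_sub_cancel]

theorem nsmul_notMem_chords (hw : UnitSteps w N) (hv : v ∉ chords w N) {k : ℕ} (hk : 0 < k) :
    k • v ∉ chords w N := by
  induction k, hk using Nat.le_induction with
  | base => rwa [Nat.succ_eq_add_one, zero_add, one_smul]
  | succ k _ ih =>
    intro hmem
    exact (nsmul_mem_chords_or_of_add_nsmul_mem hw hmem).elim ih (by rwa [one_smul])

end ChordTheorem

section Words

variable {m l : List (ℤ × ℤ)} {N : ℕ}

theorem psum_append_of_le {c : ℕ} (hc : c ≤ m.length) : psum (m ++ l) c = psum m c := by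
  rw [psum, psum, List.take_append_of_le_length hc]

theorem psum_append_length_add (c : ℕ) : psum (m ++ l) (m.length + c) = m.sum + psum l c := by
  rw [psum, psum, List.take_length_add_append, List.sum_append]

theorem psum_flatten_replicate (hm : m ≠ []) (k : ℕ) {c : ℕ} (hc : c ≤ k * m.length) :
    psum (List.replicate k m).flatten c = periodize (psum m) m.length m.sum c := by
  have hpos : 0 < m.length := List.length_pos_iff.2 hm
  induction k generalizing c with
  | zero =>
    obtain rfl : c = 0 := by lia
    rw [periodize_of_lt hpos]
    rfl
  | succ k ih =>
    rw [List.replicate_succ, List.flatten_cons]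
    rcases lt_or_ge c m.length with hlt | hge
    · rw [psum_append_of_le hlt.le, periodize_of_lt hlt]
    · obtain ⟨b, rfl⟩ := Nat.exists_eq_add_of_le' hge
      rw [periodize_add_period hpos, ← ih (by lia), add_comm b, psum_append_length_add, add_comm]

theorem unitSteps_psum (hm : ∀ d ∈ m, d ∈ Dir) : UnitSteps (psum m) m.length := by
  intro c hc
  rw [psum, psum, List.sum_take_succ _ _ hc, add_sub_cancel_left]
  exact hm _ (List.getElem_mem hc)

theorem selfAvoiding_iff_injOn : SelfAvoiding m ↔ Set.InjOn (psum m) (Set.Iic m.length) := by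
  constructor
  · intro h a ha b hb hab
    exact congrArg Fin.val
      (@h ⟨a, Nat.lt_succ_of_le ha⟩ ⟨b, Nat.lt_succ_of_le hb⟩ hab)
  · intro h a b hab
    exact Fin.ext (h (Nat.lt_succ_iff.1 a.2) (Nat.lt_succ_iff.1 b.2) hab)

theorem SelfAvoiding.of_append_left (h : SelfAvoiding (m ++ l)) : SelfAvoiding m := by
  rw [selfAvoiding_iff_injOn] at h ⊢
  have hle : m.length ≤ (m ++ l).length := by simp
  exact (h.mono (Set.Iic_subset_Iic.2 hle)).congr fun c hc => psum_append_of_le hc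

theorem SelfAvoiding.sum_notMem_chords (h : SelfAvoiding (m ++ m)) (hN : N < m.length) :
    m.sum ∉ chords (psum m) N := by
  rintro ⟨a, ha, b, hb, hab⟩
  have hrepeat : psum (m ++ m) a = psum (m ++ m) (m.length + b) := by
    rw [psum_append_of_le (by lia), psum_append_length_add, ← hab, sub_add_cancel]
  have hlen : (m ++ m).length = m.length + m.length := List.length_append
  have := selfAvoiding_iff_injOn.1 h (by rw [Set.mem_Iic]; lia) (by rw [Set.mem_Iic]; lia) hrepeat
  lia

end Words

theorem stmt0 (m : List (ℤ × ℤ)) (hm : m ≠ []) (hdir : ∀ d ∈ m, d ∈ Dir)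
    (hsq : SelfAvoiding (m ++ m)) :
    ∀ k : ℕ, 1 ≤ k → SelfAvoiding (List.flatten (List.replicate k m)) := by
  intro k _
  obtain ⟨N, hN⟩ : ∃ N, m.length = N + 1 :=
    Nat.exists_eq_succ_of_ne_zero (List.length_pos_iff.2 hm).ne'
  have hNm : N < m.length := by lia
  have hsteps : UnitSteps (psum m) N := fun c hc => unitSteps_psum hdir c (hc.trans hNm)
  have hinj : Set.InjOn (psum m) (Set.Iic N) :=
    (selfAvoiding_iff_injOn.1 hsq.of_append_left).mono (Set.Iic_subset_Iic.2 hNm.le)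
  have hperiodic : Function.Injective (periodize (psum m) m.length m.sum) :=
    hN ▸ periodize_injective hinj
      fun _ hj => nsmul_notMem_chords hsteps (hsq.sum_notMem_chords hNm) hj
  have hlen : (List.replicate k m).flatten.length = k * m.length := by simp
  rw [selfAvoiding_iff_injOn, hlen]
  exact hperiodic.injOn.congr fun c hc => (psum_flatten_replicate hm k hc).symm
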